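/- Let ω be a configuration, x ∈ ℝ² and R > 0. Denote by N_hol(S) the number of bounded connected components of ℝ² ∖ S. Then the number of holes created when the ball B̄(x,R) is added to ω̄ is controlled by the intersection: N_hol(ω̄ ∪ B̄(x,R)) − N_hol(ω̄) is at most the number of connected components of the set ω̄ ∩ B̄(x,R). -/

import Mathlib

open Metric Set

/-- The germ-grain surface of a finite configuration: the union of the closed balls. -/
def surface (ω : Finset (EuclideanSpace ℝ (Fin 2) × ℝ)) : Set (EuclideanSpace ℝ (Fin 2)) :=
  ⋃ p ∈ ω, Metric.closedBall p.1 p.2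

/-- The number of connected components of a subset of the plane. -/
noncomputable def ncc (S : Set (EuclideanSpace ℝ (Fin 2))) : ℕ :=
  {C : Set (EuclideanSpace ℝ (Fin 2)) | ∃ x ∈ S, C = connectedComponentIn S x}.ncard

/-- The number of holes (bounded connected components of the complement) of `S`. -/
noncomputable def nhol (S : Set (EuclideanSpace ℝ (Fin 2))) : ℕ :=
  {T : Set (EuclideanSpace ℝ (Fin 2)) |
    (∃ t ∈ Sᶜ, T = connectedComponentIn Sᶜ t) ∧ Bornology.IsBounded T}.ncard

/-!
Holes of a compact plane set are detected by continuous logarithms. Choose a point `p i` in each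
hole of `A ∪ B`. The function `∏ i, (z - p i) ^ k i` has a continuous logarithm on `A ∪ B` only if
`k = 0`: otherwise some `(z - p i) ^ k i` with `k i ≠ 0` would extend without zeros across the hole
of `p i`, whereas it winds around `0` along a large circle.

On `A`, the function `(z - p) / (z - q)` has a logarithm when `p` and `q` lie in the same component
of the complement, and `z - p` has one when `p` lies in an unbounded component. So if `k` has total
degree zero in every hole of `A` and of `B`, there are logarithms on `A` and on `B`. They differ on
each component of `A ∩ B` by a constant in `2πiℤ`, and they can be glued when all these constants
vanish. Hence the lattice of such `k` has rank at most the number of components of `A ∩ B`, while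
its corank is at most the number of holes of `A` plus that of `B`. Finally, convex sets have no
holes.
-/

namespace PlanarHoles

/-- The set of connected components of `S`. -/
def components {X : Type*} [TopologicalSpace X] (S : Set X) : Set (Set X) :=
  {C | ∃ x ∈ S, C = connectedComponentIn S x}

/-- The set of holes of `S`, the bounded connected components of its complement. -/
def holes {X : Type*} [TopologicalSpace X] [Bornology X] (S : Set X) : Set (Set X) :=
  {T | T ∈ components Sᶜ ∧ Bornology.IsBounded T}

/-! ### Continuous logarithms -/

section Logarithm

variable {X ι : Type*} [TopologicalSpace X] {f f₁ f₂ g g₁ g₂ : X → ℂ} {A B S : Set X}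

/-- `g` is a continuous logarithm of `f` on `S`. -/
def IsLogOn (g f : X → ℂ) (S : Set X) : Prop :=
  ContinuousOn g S ∧ ∀ z ∈ S, Complex.exp (g z) = f z

/-- `f` has a continuous logarithm on `S`. For `f` continuous and nonvanishing, this says that `f`
represents zero in the first cohomology group of `S` with integer coefficients. -/
def HasLogOn (f : X → ℂ) (S : Set X) : Prop :=
  ∃ g, IsLogOn g f S

lemma IsLogOn.hasLogOn (h : IsLogOn g f S) : HasLogOn f S := ⟨g, h⟩

lemma IsLogOn.mono (h : IsLogOn g f B) (hAB : A ⊆ B) : IsLogOn g f A :=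
  ⟨h.1.mono hAB, fun z hz ↦ h.2 z (hAB hz)⟩

lemma IsLogOn.mul (h₁ : IsLogOn g₁ f₁ S) (h₂ : IsLogOn g₂ f₂ S) :
    IsLogOn (g₁ + g₂) (f₁ * f₂) S :=
  ⟨h₁.1.add h₂.1, fun z hz ↦ by
    rw [Pi.add_apply, Complex.exp_add, h₁.2 z hz, h₂.2 z hz, Pi.mul_apply]⟩

lemma IsLogOn.zpow (h : IsLogOn g f S) (n : ℤ) : IsLogOn (n • g) (f ^ n) S :=
  ⟨h.1.const_smul n, fun z hz ↦ by
    rw [Pi.smul_apply, zsmul_eq_mul, Complex.exp_int_mul, h.2 z hz, Pi.pow_apply]⟩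

lemma IsLogOn.congr (h : IsLogOn g f₁ S) (hf : EqOn f₁ f₂ S) : IsLogOn g f₂ S :=
  ⟨h.1, fun z hz ↦ (h.2 z hz).trans (hf hz)⟩

lemma isLogOn_zero_one : IsLogOn (0 : X → ℂ) 1 S :=
  ⟨continuousOn_const, fun _ _ ↦ Complex.exp_zero⟩

lemma IsLogOn.hasLogOn_union (hA : IsClosed A) (hB : IsClosed B) (h₁ : IsLogOn g₁ f A)
    (h₂ : IsLogOn g₂ f B) (h : EqOn g₁ g₂ (A ∩ B)) : HasLogOn f (A ∪ B) := by
  classical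
  have hgA : EqOn (A.piecewise g₁ g₂) g₁ A := A.piecewise_eqOn g₁ g₂
  have hgB : EqOn (A.piecewise g₁ g₂) g₂ B := fun z hz ↦ by
    by_cases hzA : z ∈ A
    · rw [hgA hzA, h ⟨hzA, hz⟩]
    · exact piecewise_eq_of_notMem A _ _ hzA
  refine ⟨A.piecewise g₁ g₂, (h₁.1.congr hgA).union_of_isClosed (h₂.1.congr hgB) hA hB, ?_⟩
  rintro z (hz | hz)
  · rw [hgA hz, h₁.2 z hz]
  · rw [hgB hz, h₂.2 z hz]

lemma HasLogOn.mono (h : HasLogOn f B) (hAB : A ⊆ B) : HasLogOn f A :=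
  (h.choose_spec.mono hAB).hasLogOn

lemma HasLogOn.congr (h : HasLogOn f₁ S) (hf : EqOn f₁ f₂ S) : HasLogOn f₂ S :=
  (h.choose_spec.congr hf).hasLogOn

lemma HasLogOn.mul (h₁ : HasLogOn f₁ S) (h₂ : HasLogOn f₂ S) : HasLogOn (f₁ * f₂) S :=
  (h₁.choose_spec.mul h₂.choose_spec).hasLogOn

lemma HasLogOn.zpow (h : HasLogOn f S) (n : ℤ) : HasLogOn (f ^ n) S :=
  (h.choose_spec.zpow n).hasLogOn

lemma HasLogOn.prod {s : Finset ι} {f : ι → X → ℂ} (h : ∀ i ∈ s, HasLogOn (f i) S) :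
    HasLogOn (∏ i ∈ s, f i) S :=
  Finset.prod_induction f (HasLogOn · S) (fun _ _ ↦ HasLogOn.mul) isLogOn_zero_one.hasLogOn h

lemma hasLogOn_of_mapsTo_slitPlane (hf : ContinuousOn f S) (h : MapsTo f S Complex.slitPlane) :
    HasLogOn f S :=
  ⟨fun z ↦ Complex.log (f z), hf.clog h, fun _ hz ↦
    Complex.exp_log (Complex.slitPlane_ne_zero (h hz))⟩

lemma hasLogOn_const {c : ℂ} (hc : c ≠ 0) : HasLogOn (fun _ ↦ c) S :=
  ⟨fun _ ↦ Complex.log c, continuousOn_const, fun _ _ ↦ Complex.exp_log hc⟩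

lemma hasLogOn_univ_of_continuous [ContractibleSpace X] [LocallyPathConnectedSpace X]
    (hf : Continuous f) (hf₀ : ∀ z, f z ≠ 0) : HasLogOn f univ := by
  have hX : IsSimplyConnected (univ : Set X) :=
    (Homeomorph.Set.univ X).toHomotopyEquiv.simplyConnectedSpace
  obtain ⟨g, hg, hgf⟩ := Complex.exists_continuousOn_eqOn_exp_comp hX isOpen_univ
    hf.continuousOn (by simpa using hf₀)
  exact ⟨g, hg, hgf⟩

lemma HasLogOn.exists_continuous_eqOn [NormalSpace X] (hS : IsClosed S) (h : HasLogOn f S) :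
    ∃ F : X → ℂ, Continuous F ∧ (∀ z, F z ≠ 0) ∧ EqOn F f S := by
  obtain ⟨g, hg, hgf⟩ := h
  obtain ⟨G, hG⟩ := ContinuousMap.exists_restrict_eq hS
    ⟨S.domRestrict g, continuousOn_iff_continuous_domRestrict.1 hg⟩
  refine ⟨fun z ↦ Complex.exp (G z), by fun_prop, fun z ↦ Complex.exp_ne_zero _, fun z hz ↦ ?_⟩
  have hGg : G z = g z := congrArg (· ⟨z, hz⟩) hG
  exact (congrArg Complex.exp hGg).trans (hgf z hz)

lemma eq_of_isLogOn_one (hS : IsPreconnected S) (hg : IsLogOn g 1 S) {x y : X}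
    (hx : x ∈ S) (hy : y ∈ S) : g x = g y :=
  Complex.isCoveringMap_exp.constOn_of_comp hS hg.1
    (fun a ha b hb ↦ Subtype.ext ((hg.2 a ha).trans (hg.2 b hb).symm)) hx hy

end Logarithm

/-! ### The Mayer–Vietoris inequality -/

section MayerVietoris

variable {X ι : Type*} [TopologicalSpace X] [Fintype ι] {f : ι → X → ℂ} {A B S : Set X}
  {H : Submodule ℤ (ι → ℤ)}

lemma exists_linearMap_isLogOn (hf : ∀ i, ∀ z ∈ S, f i z ≠ 0)
    (hH : ∀ k ∈ H, HasLogOn (∏ i, f i ^ k i) S) :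
    ∃ l : H →ₗ[ℤ] X → ℂ, ∀ k : H, IsLogOn (l k) (∏ i, f i ^ k.1 i) S := by
  let b := Module.Free.chooseBasis ℤ H
  choose g hg using fun j ↦ hH (b j) (b j).2
  let l := b.constr ℤ g
  refine ⟨l, fun k ↦ Submodule.span_induction
    (p := fun k _ ↦ IsLogOn (l k) (∏ i, f i ^ k.1 i) S) ?_ ?_ ?_ ?_ (b.mem_span k)⟩
  · rintro _ ⟨j, rfl⟩
    simpa only [l, b.constr_basis] using hg j
  · simpa using isLogOn_zero_one
  · intro k k' _ _ hk hk'
    rw [map_add]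
    refine (hk.mul hk').congr fun z hz ↦ ?_
    simp [Finset.prod_mul_distrib, zpow_add₀ (hf _ z hz)]
  · intro n k _ hk
    rw [map_smul]
    refine (hk.zpow n).congr fun z _ ↦ ?_
    simp [Finset.prod_zpow, zpow_mul, mul_comm n]

lemma mem_span_two_pi_I_of_isLogOn_one {g : X → ℂ} (hg : IsLogOn g 1 S) {x : X} (hx : x ∈ S) :
    g x ∈ Submodule.span ℤ {2 * Real.pi * Complex.I} := by
  obtain ⟨n, hn⟩ := Complex.exp_eq_one_iff.1 (hg.2 x hx)
  exact Submodule.mem_span_singleton.2 ⟨n, by rw [hn, zsmul_eq_mul]⟩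

/-- The connecting homomorphism of the Mayer–Vietoris sequence: the logarithms on `A` and `B` of
a function differ on each component of `A ∩ B` by a constant in `2πiℤ`, and they glue to a
logarithm on `A ∪ B` if all these constants vanish. -/
lemma finrank_le_ncard_components_inter (hA : IsClosed A) (hB : IsClosed B)
    (hfin : (components (A ∩ B)).Finite) (hf : ∀ i, ∀ z ∈ A ∪ B, f i z ≠ 0)
    (hHA : ∀ k ∈ H, HasLogOn (∏ i, f i ^ k i) A) (hHB : ∀ k ∈ H, HasLogOn (∏ i, f i ^ k i) B)
    (hH : ∀ k ∈ H, HasLogOn (∏ i, f i ^ k i) (A ∪ B) → k = 0) :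
    Module.finrank ℤ H ≤ (components (A ∩ B)).ncard := by
  obtain ⟨lA, hlA⟩ := exists_linearMap_isLogOn (fun i z hz ↦ hf i z (.inl hz)) hHA
  obtain ⟨lB, hlB⟩ := exists_linearMap_isLogOn (fun i z hz ↦ hf i z (.inr hz)) hHB
  have hdiff (k : H) : IsLogOn ((lA - lB) k) 1 (A ∩ B) := by
    refine ⟨((hlA k).1.mono inter_subset_left).sub ((hlB k).1.mono inter_subset_right), ?_⟩
    rintro z ⟨hzA, hzB⟩
    rw [LinearMap.sub_apply, Pi.sub_apply, Complex.exp_sub, (hlA k).2 z hzA, (hlB k).2 z hzB,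
      ← (hlA k).2 z hzA, div_self (Complex.exp_ne_zero _), Pi.one_apply]
  choose a ha haC using fun C : components (A ∩ B) ↦ C.2
  let e := LinearEquiv.toSpanNonzeroSingleton ℤ ℂ (2 * Real.pi * Complex.I) Complex.two_pi_I_ne_zero
  let δ : H →ₗ[ℤ] components (A ∩ B) → ℤ := LinearMap.pi fun C ↦
    e.symm.toLinearMap ∘ₗ (LinearMap.proj (a C) ∘ₗ (lA - lB)).codRestrict _
      fun k ↦ mem_span_two_pi_I_of_isLogOn_one (hdiff k) (ha C)
  have hδ : Function.Injective δ := by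
    refine LinearMap.ker_eq_bot.1 (LinearMap.ker_eq_bot'.2 fun k hk ↦ ?_)
    refine Subtype.ext (hH k k.2 ((hlA k).hasLogOn_union hA hB (hlB k) fun z hz ↦ ?_))
    let C : components (A ∩ B) := ⟨_, z, hz, rfl⟩
    have haz : a C ∈ connectedComponentIn (A ∩ B) z :=
      (haC C).ge (mem_connectedComponentIn (ha C))
    have hzero : (lA - lB) k (a C) = 0 :=
      congrArg Subtype.val (e.symm.map_eq_zero_iff.1 (congrFun hk C))
    have hconst : (lA - lB) k z = (lA - lB) k (a C) :=
      eq_of_isLogOn_one isPreconnected_connectedComponentIn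
        ((hdiff k).mono (connectedComponentIn_subset _ _)) (mem_connectedComponentIn hz) haz
    exact sub_eq_zero.1 (hconst.trans hzero)
  have := hfin.fintype
  calc Module.finrank ℤ H ≤ Module.finrank ℤ (components (A ∩ B) → ℤ) :=
        LinearMap.finrank_le_finrank_of_injective hδ
    _ = (components (A ∩ B)).ncard := by
        rw [Module.finrank_fintype_fun_eq_card, Fintype.card_eq_nat_card, Nat.card_coe_set_eq]

end MayerVietoris

/-! ### Logarithms of `z - p` in the plane -/

section Plane

variable {ι : Type*} {A K V : Set ℂ} {p q t : ℂ}

lemma hasLogOn_sub_div_sub_of_dist_lt (h : ∀ z ∈ A, dist p q < dist z q) :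
    HasLogOn (fun z ↦ (z - p) / (z - q)) A := by
  have hne : ∀ z ∈ A, z - q ≠ 0 := fun z hz ↦
    sub_ne_zero.2 (dist_pos.1 (dist_nonneg.trans_lt (h z hz)))
  refine hasLogOn_of_mapsTo_slitPlane (by fun_prop (disch := exact hne _ ‹_›)) fun z hz ↦ ?_
  have hsplit : (z - p) / (z - q) = 1 + (q - p) / (z - q) := by
    field_simp [hne z hz]; ring
  rw [hsplit]
  refine Complex.mem_slitPlane_of_norm_lt_one ?_
  rw [norm_div, ← dist_eq_norm, ← dist_eq_norm, dist_comm q,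
    div_lt_one (dist_nonneg.trans_lt (h z hz))]
  exact h z hz

lemma hasLogOn_sub_of_norm_lt (h : ∀ z ∈ A, ‖z‖ < ‖q‖) : HasLogOn (fun z ↦ z - q) A := by
  rcases A.eq_empty_or_nonempty with rfl | ⟨a, ha⟩
  · exact ⟨0, continuousOn_empty _, fun _ h ↦ h.elim⟩
  have hq : q ≠ 0 := norm_pos_iff.1 ((norm_nonneg a).trans_lt (h a ha))
  have hslit : HasLogOn (fun z ↦ 1 + -z / q) A :=
    hasLogOn_of_mapsTo_slitPlane (by fun_prop) fun z hz ↦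
      Complex.mem_slitPlane_of_norm_lt_one <| by
        rw [norm_div, norm_neg, div_lt_one (norm_pos_iff.2 hq)]
        exact h z hz
  refine ((hasLogOn_const (neg_ne_zero.2 hq)).mul hslit).congr fun z _ ↦ ?_
  simp only [Pi.mul_apply]
  field_simp
  ring

lemma hasLogOn_sub_div_sub (hA : IsClosed A) (hp : p ∈ connectedComponentIn Aᶜ t)
    (hq : q ∈ connectedComponentIn Aᶜ t) : HasLogOn (fun z ↦ (z - p) / (z - q)) A := by
  have hne {a : ℂ} (ha : a ∈ connectedComponentIn Aᶜ t) {z : ℂ} (hz : z ∈ A) : z - a ≠ 0 :=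
    sub_ne_zero.2 fun h ↦ connectedComponentIn_subset _ _ ha (h ▸ hz)
  refine isPreconnected_connectedComponentIn.induction₂
    (fun p q ↦ HasLogOn (fun z ↦ (z - p) / (z - q)) A) ?_ ?_ ?_ hp hq
  · intro x hx
    obtain ⟨ε, hε, hball⟩ := Metric.isOpen_iff.1 hA.isOpen_compl x
      (connectedComponentIn_subset _ _ hx)
    filter_upwards [nhdsWithin_le_nhds (ball_mem_nhds x (half_pos hε))] with y hy
    refine hasLogOn_sub_div_sub_of_dist_lt fun z hz ↦ ?_
    have hεz : ε ≤ dist z x := not_lt.1 fun hlt ↦ hball hlt hz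
    rw [mem_ball] at hy
    linarith [dist_triangle z y x, dist_comm x y]
  · intro x y w _ hy _ hxy hyw
    exact (hxy.mul hyw).congr fun z hz ↦ div_mul_div_cancel₀ (hne hy hz)
  · intro x y _ _ hxy
    exact (hxy.zpow (-1)).congr fun z _ ↦ by simp

lemma hasLogOn_sub_of_not_isBounded (hA : IsCompact A) (hp : p ∈ Aᶜ)
    (hunb : ¬ Bornology.IsBounded (connectedComponentIn Aᶜ p)) :
    HasLogOn (fun z ↦ z - p) A := by
  obtain ⟨r, hr⟩ := hA.isBounded.exists_norm_le
  obtain ⟨q, hq, hrq⟩ : ∃ q ∈ connectedComponentIn Aᶜ p, r < ‖q‖ := by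
    by_contra! hle
    exact hunb (isBounded_iff_forall_norm_le.2 ⟨r, hle⟩)
  refine ((hasLogOn_sub_div_sub hA.isClosed (mem_connectedComponentIn hp) hq).mul
    (hasLogOn_sub_of_norm_lt fun z hz ↦ (hr z hz).trans_lt hrq)).congr fun z hz ↦ ?_
  have hzq : z ≠ q := fun h ↦ connectedComponentIn_subset _ _ hq (h ▸ hz)
  exact div_mul_cancel₀ _ (sub_ne_zero.2 hzq)

lemma prod_zpow_eq_zpow_sum {G : Type*} [CommGroupWithZero G] {a : G} (ha : a ≠ 0) (s : Finset ι)
    (k : ι → ℤ) : ∏ i ∈ s, a ^ k i = a ^ ∑ i ∈ s, k i := by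
  classical
  induction s using Finset.induction_on with
  | empty => simp
  | insert i s hi ih => rw [Finset.prod_insert hi, Finset.sum_insert hi, ih, zpow_add₀ ha]

lemma hasLogOn_prod_zpow_of_sum_eq_zero (hA : IsClosed A) {s : Finset ι} {p : ι → ℂ} {k : ι → ℤ}
    (ht : t ∈ Aᶜ) (hp : ∀ i ∈ s, p i ∈ connectedComponentIn Aᶜ t) (hk : ∑ i ∈ s, k i = 0) :
    HasLogOn (∏ i ∈ s, (fun z ↦ z - p i) ^ k i) A := by
  refine (HasLogOn.prod fun i hi ↦ (hasLogOn_sub_div_sub hA (hp i hi)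
    (mem_connectedComponentIn ht)).zpow (k i)).congr fun z hz ↦ ?_
  have hzt : z - t ≠ 0 := sub_ne_zero.2 fun h ↦ ht (h ▸ hz)
  have hone : ∏ i ∈ s, (z - t) ^ k i = 1 := by
    rw [prod_zpow_eq_zpow_sum hzt, hk, zpow_zero]
  simp [div_zpow, Finset.prod_div_distrib, hone]

/-- The total degree, in each set of the family `𝒯`, of the divisor `∑ i, k i • [p i]`, as a linear
map in `k`. When `𝒯` contains the holes of `A`, it is the obstruction to a logarithm on `A` of
`∏ i, (z - p i) ^ k i`. -/
noncomputable def degree [Fintype ι] (p : ι → ℂ) (𝒯 : Set (Set ℂ)) : (ι → ℤ) →ₗ[ℤ] 𝒯 → ℤ :=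
  open scoped Classical in LinearMap.pi fun T ↦ ∑ i with p i ∈ T.1, LinearMap.proj i

lemma degree_apply [Fintype ι] (p : ι → ℂ) (𝒯 : Set (Set ℂ)) (k : ι → ℤ) (T : 𝒯)
    [DecidablePred (p · ∈ T.1)] : degree p 𝒯 k T = ∑ i with p i ∈ T.1, k i := by
  simp only [degree, LinearMap.pi_apply, LinearMap.sum_apply, LinearMap.proj_apply]
  congr!

lemma hasLogOn_prod_zpow_of_degree_eq_zero [Fintype ι] (hA : IsCompact A) {p : ι → ℂ}
    (hp : ∀ i, p i ∈ Aᶜ) {k : ι → ℤ} {𝒯 : Set (Set ℂ)} (h𝒯 : holes A ⊆ 𝒯)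
    (hk : degree p 𝒯 k = 0) : HasLogOn (∏ i, (fun z ↦ z - p i) ^ k i) A := by
  classical
  let component (i : ι) : Set ℂ := connectedComponentIn Aᶜ (p i)
  rw [← Finset.prod_fiberwise_of_maps_to (t := Finset.univ.image component) (g := component)
    (by simp)]
  refine HasLogOn.prod fun C hC ↦ ?_
  obtain ⟨j, -, rfl⟩ := Finset.mem_image.1 hC
  by_cases hbdd : Bornology.IsBounded (component j)
  · have hmem (i : ι) : component i = component j ↔ p i ∈ component j :=
      ⟨fun h ↦ h ▸ mem_connectedComponentIn (hp i), fun h ↦ (connectedComponentIn_eq h).symm⟩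
    have hsum : ∑ i with p i ∈ component j, k i = 0 := by
      let T : 𝒯 := ⟨component j, h𝒯 ⟨⟨p j, hp j, rfl⟩, hbdd⟩⟩
      rw [← degree_apply p 𝒯 k T, hk, Pi.zero_apply]
    simp only [hmem]
    exact hasLogOn_prod_zpow_of_sum_eq_zero hA.isClosed (hp j) (by simp [component]) hsum
  · refine HasLogOn.prod fun i hi ↦ HasLogOn.zpow ?_ _
    refine hasLogOn_sub_of_not_isBounded hA (hp i) ?_
    rwa [← (Finset.mem_filter.1 hi).2] at hbdd

lemma eq_zero_of_hasLogOn_sphere {r : ℝ} (hr : 0 < r) {n : ℤ}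
    (h : HasLogOn ((fun z ↦ z - p) ^ n) (sphere p r)) : n = 0 := by
  obtain ⟨g, hg, hexp⟩ := h
  have hmem (θ : ℝ) : circleMap p r θ ∈ sphere p r := circleMap_mem_sphere p hr.le θ
  let φ : ℝ → ℂ := fun θ ↦ g (circleMap p r θ) - n * (θ * Complex.I)
  have hφ : Continuous φ :=
    (hg.comp_continuous (continuous_circleMap p r) hmem).sub (by fun_prop)
  have hφexp (θ : ℝ) : Complex.exp (φ θ) = (r : ℂ) ^ n := by
    rw [Complex.exp_sub, hexp _ (hmem θ), Pi.pow_apply, circleMap_sub_center, circleMap_zero,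
      mul_zpow, Complex.exp_int_mul,
      mul_div_cancel_right₀ _ (zpow_ne_zero _ (Complex.exp_ne_zero _))]
  have hconst : φ (2 * Real.pi) = φ 0 :=
    Complex.isCoveringMap_exp.constOn_of_comp isPreconnected_univ hφ.continuousOn
      (fun a _ b _ ↦ Subtype.ext ((hφexp a).trans (hφexp b).symm)) (mem_univ _) (mem_univ _)
  have hperiod : circleMap p r (2 * Real.pi) = circleMap p r 0 := by
    simpa using periodic_circleMap p r 0
  simpa [φ, hperiod, Real.pi_ne_zero] using hconst

/-- Otherwise `u` and `(z - p) ^ n` glue to a nonvanishing continuous function on the plane; this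
has a logarithm, while `(z - p) ^ n` has none on a large circle. -/
lemma eq_zero_of_eqOn_frontier (hV : Bornology.IsBounded V) (hVo : IsOpen V) (hp : p ∈ V)
    {u : ℂ → ℂ} (hu : ContinuousOn u (closure V)) (hu₀ : ∀ z ∈ V, u z ≠ 0) {n : ℤ}
    (hfr : ∀ z ∈ frontier V, u z = (z - p) ^ n) : n = 0 := by
  classical
  have hne : ∀ z ∈ Vᶜ, z - p ≠ 0 := fun z hz ↦ sub_ne_zero.2 fun h ↦ hz (h ▸ hp)
  let F : ℂ → ℂ := V.piecewise u fun z ↦ (z - p) ^ n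
  have hF : Continuous F := by
    refine continuous_piecewise hfr hu ?_
    rw [hVo.isClosed_compl.closure_eq]
    exact (continuousOn_id.sub continuousOn_const).zpow₀ n fun z hz ↦ .inl (hne z hz)
  have hF₀ (z : ℂ) : F z ≠ 0 := by
    by_cases hz : z ∈ V
    · simpa only [F, piecewise_eq_of_mem _ _ _ hz] using hu₀ z hz
    · simpa only [F, piecewise_eq_of_notMem _ _ _ hz] using zpow_ne_zero n (hne z hz)
  obtain ⟨r, hr, hVr⟩ := hV.subset_ball_lt 0 p
  have hlogF : HasLogOn F (sphere p r) :=
    (hasLogOn_univ_of_continuous hF hF₀).mono (subset_univ _)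
  refine eq_zero_of_hasLogOn_sphere hr (hlogF.congr fun z hz ↦ ?_)
  exact piecewise_eq_of_notMem _ _ _ fun hzV ↦ (mem_ball.1 (hVr hzV)).ne hz

lemma frontier_connectedComponentIn_compl_subset {X : Type*} [TopologicalSpace X]
    [LocallyConnectedSpace X] {K : Set X} (hK : IsClosed K) (x : X) :
    frontier (connectedComponentIn Kᶜ x) ⊆ K := by
  intro z hz
  by_contra hzK
  have hz' : z ∈ connectedComponentIn Kᶜ z := mem_connectedComponentIn hzK
  obtain ⟨y, hyz, hyx⟩ := mem_closure_iff.1 hz.1 _ hK.isOpen_compl.connectedComponentIn hz'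
  rw [connectedComponentIn_eq hyz, ← connectedComponentIn_eq hyx] at hz'
  exact hz.2 (hK.isOpen_compl.connectedComponentIn.interior_eq.symm ▸ hz')

/-- Solving for the factor `(z - p i₀) ^ k i₀` on `K` extends it, without zeros, over the hole
containing `p i₀`. -/
lemma eq_zero_of_hasLogOn_prod_zpow [Fintype ι] (hK : IsClosed K) {p : ι → ℂ}
    (hp : ∀ i, connectedComponentIn Kᶜ (p i) ∈ holes K)
    (hinj : Function.Injective fun i ↦ connectedComponentIn Kᶜ (p i)) {k : ι → ℤ}
    (h : HasLogOn (∏ i, (fun z ↦ z - p i) ^ k i) K) : k = 0 := by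
  classical
  have hpK (i : ι) : p i ∉ K := connectedComponentIn_nonempty_iff.1 <| by
    obtain ⟨t, ht, hT⟩ := (hp i).1
    exact hT ▸ connectedComponentIn_nonempty_iff.2 ht
  obtain ⟨F, hF, hF₀, hFK⟩ := h.exists_continuous_eqOn hK
  ext i₀
  let V : Set ℂ := connectedComponentIn Kᶜ (p i₀)
  have hfr : frontier V ⊆ K := frontier_connectedComponentIn_compl_subset hK _
  have hpV (i : ι) (hi : i ≠ i₀) : p i ∉ closure V := by
    rw [closure_eq_self_union_frontier]
    exact fun h ↦ h.elim (fun hV ↦ hi (hinj (connectedComponentIn_eq hV).symm))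
      fun hfrV ↦ hpK i (hfr hfrV)
  have hne : ∀ i ∈ Finset.univ.erase i₀, ∀ z ∈ closure V, z - p i ≠ 0 := fun i hi z hz ↦
    sub_ne_zero.2 fun h ↦ hpV i (Finset.ne_of_mem_erase hi) (h ▸ hz)
  let v : ℂ → ℂ := fun z ↦ ∏ i ∈ Finset.univ.erase i₀, (z - p i) ^ k i
  have hv₀ : ∀ z ∈ closure V, v z ≠ 0 := fun z hz ↦
    Finset.prod_ne_zero_iff.2 fun i hi ↦ zpow_ne_zero _ (hne i hi z hz)
  have hv : ContinuousOn v (closure V) := continuousOn_finsetProd _ fun i hi ↦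
    (continuousOn_id.sub continuousOn_const).zpow₀ _ fun z hz ↦ .inl (hne i hi z hz)
  refine eq_zero_of_eqOn_frontier (hp i₀).2 hK.isOpen_compl.connectedComponentIn
    (mem_connectedComponentIn (hpK i₀)) (hF.continuousOn.div hv hv₀)
    (fun z hz ↦ div_ne_zero (hF₀ z) (hv₀ z (subset_closure hz))) fun z hz ↦ ?_
  rw [Pi.div_apply, div_eq_iff (hv₀ z hz.1), hFK (hfr hz), Finset.prod_apply]
  exact (Finset.mul_prod_erase _ _ (Finset.mem_univ i₀)).symm

end Plane

/-! ### Counting holes -/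

section Counting

universe u

lemma finrank_le_finrank_ker_add {R N : Type*} {M : Type u} [Ring R] [StrongRankCondition R]
    [HasRankNullity.{u} R] [AddCommGroup M] [Module R M] [Module.Finite R M] [AddCommGroup N]
    [Module R N] [Module.Finite R N] (f : M →ₗ[R] N) :
    Module.finrank R M ≤ Module.finrank R (LinearMap.ker f) + Module.finrank R N := by
  have hquot : Module.finrank R (M ⧸ LinearMap.ker f) ≤ Module.finrank R N := by
    rw [f.quotKerEquivRange.finrank_eq]
    exact LinearMap.finrank_le_finrank_of_injective (LinearMap.range f).injective_subtype
  have hadd := Submodule.finrank_quotient_add_finrank (LinearMap.ker f)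
  omega

lemma card_le_ncard_holes_add_ncard_components {ι : Type*} [Fintype ι] {A B : Set ℂ}
    (hA : IsCompact A) (hB : IsCompact B) (hholes : (holes A ∪ holes B).Finite)
    (hcomp : (components (A ∩ B)).Finite) {p : ι → ℂ} (hpAB : ∀ i, p i ∈ (A ∪ B)ᶜ)
    (hp : ∀ i, connectedComponentIn (A ∪ B)ᶜ (p i) ∈ holes (A ∪ B))
    (hinj : Function.Injective fun i ↦ connectedComponentIn (A ∪ B)ᶜ (p i)) :
    Fintype.card ι ≤ (holes A ∪ holes B).ncard + (components (A ∩ B)).ncard := by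
  have := hholes.fintype
  let H := LinearMap.ker (degree p (holes A ∪ holes B))
  have hH : Module.finrank ℤ H ≤ (components (A ∩ B)).ncard := by
    refine finrank_le_ncard_components_inter (f := fun i z ↦ z - p i) hA.isClosed hB.isClosed hcomp
      (fun i z hz ↦ sub_ne_zero.2 fun h ↦ hpAB i (h ▸ hz)) (fun k hk ↦ ?_) (fun k hk ↦ ?_)
      fun k _ ↦ eq_zero_of_hasLogOn_prod_zpow (hA.isClosed.union hB.isClosed) hp hinj
    · exact hasLogOn_prod_zpow_of_degree_eq_zero hA (fun i h ↦ hpAB i (.inl h))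
        subset_union_left hk
    · exact hasLogOn_prod_zpow_of_degree_eq_zero hB (fun i h ↦ hpAB i (.inr h))
        subset_union_right hk
  have hrank : Fintype.card ι ≤ Module.finrank ℤ H + (holes A ∪ holes B).ncard := by
    simpa only [Module.finrank_fintype_fun_eq_card,
      Fintype.card_eq_nat_card (α := ↥(holes A ∪ holes B)), Nat.card_coe_set_eq] using
      finrank_le_finrank_ker_add (degree p (holes A ∪ holes B))
  omega

lemma encard_holes_union_le_complex {A B : Set ℂ} (hA : IsCompact A) (hB : IsCompact B) :
    (holes (A ∪ B)).encard ≤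
      (holes A).encard + (holes B).encard + (components (A ∩ B)).encard := by
  refine le_trans ?_ (add_le_add_left (encard_union_le (holes A) (holes B)) _)
  by_cases hfin : (holes A ∪ holes B).Finite ∧ (components (A ∩ B)).Finite
  swap
  · have htop : (holes A ∪ holes B).encard = ⊤ ∨ (components (A ∩ B)).encard = ⊤ := by
      simpa only [encard_eq_top_iff, Set.Infinite, ← not_and_or] using hfin
    exact le_top.trans_eq (WithTop.add_eq_top.2 htop).symm
  obtain ⟨hholes, hcomp⟩ := hfin
  rw [← hholes.cast_ncard_eq, ← hcomp.cast_ncard_eq, ← Nat.cast_add]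
  by_contra! hlt
  obtain ⟨𝒯, h𝒯, hcard⟩ := exists_subset_encard_eq (Order.add_one_le_of_lt hlt)
  have h𝒯fin : 𝒯.Finite := finite_of_encard_eq_coe (by exact_mod_cast hcard)
  have := h𝒯fin.fintype
  choose p hp hpT using fun T : 𝒯 ↦ (h𝒯 T.2).1
  have hle := card_le_ncard_holes_add_ncard_components hA hB hholes hcomp hp
    (fun T ↦ hpT T ▸ h𝒯 T.2)
    fun T T' h ↦ Subtype.ext ((hpT T).trans (h.trans (hpT T').symm))
  rw [Fintype.card_eq_nat_card, Nat.card_coe_set_eq] at hle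
  rw [← h𝒯fin.cast_ncard_eq] at hcard
  norm_cast at hcard
  omega

lemma components_image {X Y : Type*} [TopologicalSpace X] [TopologicalSpace Y] (e : X ≃ₜ Y)
    (S : Set X) : components (e '' S) = image e '' components S := by
  ext C
  constructor
  · rintro ⟨_, ⟨x, hx, rfl⟩, rfl⟩
    exact ⟨_, ⟨x, hx, rfl⟩, e.image_connectedComponentIn hx⟩
  · rintro ⟨_, ⟨x, hx, rfl⟩, rfl⟩
    exact ⟨e x, mem_image_of_mem e hx, e.image_connectedComponentIn hx⟩

lemma holes_image {X Y : Type*} [PseudoMetricSpace X] [PseudoMetricSpace Y] (e : X ≃ᵢ Y)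
    (S : Set X) : holes (e '' S) = image e '' holes S := by
  have hbdd (T : Set X) : Bornology.IsBounded (e '' T) ↔ Bornology.IsBounded T :=
    ⟨fun h ↦ by simpa [preimage_image_eq _ e.injective] using
      e.isometry.antilipschitz.isBounded_preimage h, e.isometry.lipschitz.isBounded_image⟩
  have hcomp : components (e '' S)ᶜ = image e '' components Sᶜ := by
    rw [← image_compl_eq e.bijective]
    exact components_image e.toHomeomorph Sᶜ
  ext T
  constructor
  · rintro ⟨hT, hTb⟩
    obtain ⟨U, hU, rfl⟩ := hcomp.le hT
    exact ⟨U, ⟨hU, (hbdd U).1 hTb⟩, rfl⟩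
  · rintro ⟨T, ⟨hT, hTb⟩, rfl⟩
    exact ⟨hcomp.ge (mem_image_of_mem _ hT), (hbdd T).2 hTb⟩

lemma encard_holes_union_le {A B : Set (EuclideanSpace ℝ (Fin 2))} (hA : IsCompact A)
    (hB : IsCompact B) : (holes (A ∪ B)).encard ≤
      (holes A).encard + (holes B).encard + (components (A ∩ B)).encard := by
  let e : EuclideanSpace ℝ (Fin 2) ≃ᵢ ℂ :=
    Complex.orthonormalBasisOneI.repr.symm.toIsometryEquiv
  have hcomp (S) : components (e '' S) = image e '' components S :=
    components_image e.toHomeomorph S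
  simpa only [← image_union, ← image_inter e.injective, holes_image, hcomp,
    e.injective.image_injective.encard_image] using
    encard_holes_union_le_complex (hA.image e.continuous) (hB.image e.continuous)

end Counting

/-! ### Unions of compact convex grains -/

section Convex

variable {ι E : Type*} [NormedAddCommGroup E] [NormedSpace ℝ E]

lemma exists_ray_subset_compl_of_convex [Nontrivial E] {C : Set E} (hC : Convex ℝ C) {t : E}
    (ht : t ∉ C) : ∃ v : E, v ≠ 0 ∧ (fun s : ℝ ↦ t + s • v) '' Ici 0 ⊆ Cᶜ := by
  rcases C.eq_empty_or_nonempty with rfl | ⟨b, hb⟩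
  · obtain ⟨v, hv⟩ := exists_ne (0 : E)
    exact ⟨v, hv, by simp⟩
  refine ⟨t - b, sub_ne_zero.2 fun h ↦ ht (h ▸ hb), ?_⟩
  rintro _ ⟨s, hs, rfl⟩ hsC
  have hs0 : 0 ≤ s := hs
  have htb : t = (1 / (1 + s)) • (t + s • (t - b)) + (s / (1 + s)) • b := by
    match_scalars <;> field_simp
    ring
  refine ht (htb ▸ ?_)
  exact hC hsC hb (by positivity) (by positivity) (by field_simp)

lemma not_isBounded_ray {t v : E} (hv : v ≠ 0) :
    ¬ Bornology.IsBounded ((fun s : ℝ ↦ t + s • v) '' Ici 0) := by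
  intro hbdd
  have hnorm : Filter.Tendsto (fun s : ℝ ↦ ‖s • v‖) Filter.atTop Filter.atTop := by
    simpa only [norm_smul] using
      tendsto_norm_atTop_atTop.atTop_mul_const (norm_pos_iff.2 hv)
  obtain ⟨r, hr⟩ := hbdd.exists_norm_le
  obtain ⟨s, hs, hsr⟩ := ((Filter.eventually_ge_atTop 0).and
    (hnorm.eventually_gt_atTop (r + ‖t‖))).exists
  have hle : ‖s • v‖ ≤ ‖t + s • v‖ + ‖t‖ := by
    simpa using norm_sub_le (t + s • v) t
  linarith [hr _ (mem_image_of_mem _ hs)]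

lemma holes_eq_empty_of_convex [Nontrivial E] {C : Set E} (hC : Convex ℝ C) : holes C = ∅ := by
  rw [eq_empty_iff_forall_notMem]
  rintro _ ⟨⟨t, ht, rfl⟩, hbdd⟩
  obtain ⟨v, hv, hray⟩ := exists_ray_subset_compl_of_convex hC ht
  have hcont : Continuous fun s : ℝ ↦ t + s • v := by fun_prop
  exact not_isBounded_ray hv <| hbdd.subset <|
    (isPreconnected_Ici.image _ hcont.continuousOn).subset_connectedComponentIn
      ⟨0, self_mem_Ici, by simp⟩ hray

lemma finite_components_biUnion {X : Type*} [TopologicalSpace X] (s : Finset ι) {C : ι → Set X}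
    (hC : ∀ i ∈ s, IsPreconnected (C i)) : (components (⋃ i ∈ s, C i)).Finite := by
  let S := ⋃ i ∈ s, C i
  have hfin : (⋃ i ∈ s, connectedComponentIn S '' C i).Finite := by
    refine s.finite_toSet.biUnion fun i hi ↦ Set.Subsingleton.finite ?_
    rintro _ ⟨x, hx, rfl⟩ _ ⟨y, hy, rfl⟩
    exact connectedComponentIn_eq
      ((hC i hi).subset_connectedComponentIn hx (subset_biUnion_of_mem (u := C) hi) hy)
  refine hfin.subset ?_
  rintro _ ⟨x, hx, rfl⟩
  obtain ⟨i, hi, hxi⟩ := mem_iUnion₂.1 hx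
  exact mem_iUnion₂.2 ⟨i, hi, x, hxi, rfl⟩

lemma finite_components_biUnion_inter (s : Finset ι) {K : ι → Set E} {B : Set E}
    (hK : ∀ i ∈ s, Convex ℝ (K i)) (hB : Convex ℝ B) :
    (components ((⋃ i ∈ s, K i) ∩ B)).Finite := by
  rw [iUnion₂_inter]
  exact finite_components_biUnion s fun i hi ↦ ((hK i hi).inter hB).isPreconnected

lemma finite_holes_biUnion (s : Finset ι) {K : ι → Set (EuclideanSpace ℝ (Fin 2))}
    (hK : ∀ i ∈ s, IsCompact (K i)) (hKc : ∀ i ∈ s, Convex ℝ (K i)) :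
    (holes (⋃ i ∈ s, K i)).Finite := by
  classical
  induction s using Finset.induction_on with
  | empty => simp [holes_eq_empty_of_convex convex_empty]
  | insert j s _ ih =>
    rw [Finset.forall_mem_insert] at hK hKc
    have hle := encard_holes_union_le (s.isCompact_biUnion hK.2) hK.1
    rw [holes_eq_empty_of_convex hKc.1, encard_empty, add_zero] at hle
    rw [Finset.set_biUnion_insert, union_comm]
    exact finite_of_encard_le_coe (hle.trans_eq (by
      rw [← (ih hK.2 hKc.2).cast_ncard_eq,
        ← (finite_components_biUnion_inter s hKc.2 hKc.1).cast_ncard_eq, ← Nat.cast_add]))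

end Convex

end PlanarHoles

open PlanarHoles in
theorem stmt_7_general {ι : Type*} (s : Finset ι) {K : ι → Set (EuclideanSpace ℝ (Fin 2))}
    (hK : ∀ i ∈ s, IsCompact (K i)) (hKc : ∀ i ∈ s, Convex ℝ (K i))
    {B : Set (EuclideanSpace ℝ (Fin 2))} (hB : IsCompact B) (hBc : Convex ℝ B) :
    (nhol ((⋃ i ∈ s, K i) ∪ B) : ℝ) - (nhol (⋃ i ∈ s, K i) : ℝ) ≤
      (ncc ((⋃ i ∈ s, K i) ∩ B) : ℝ) := by
  let S := ⋃ i ∈ s, K i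
  have hcomp : (components (S ∩ B)).Finite := finite_components_biUnion_inter s hKc hBc
  have hholes : (holes S).Finite := finite_holes_biUnion s hK hKc
  have hle : (holes (S ∪ B)).encard ≤ ((nhol S + ncc (S ∩ B) : ℕ) : ℕ∞) := by
    have h := encard_holes_union_le (s.isCompact_biUnion hK) hB
    rwa [holes_eq_empty_of_convex hBc, encard_empty, add_zero, ← hholes.cast_ncard_eq,
      ← hcomp.cast_ncard_eq, ← Nat.cast_add] at h
  have hnat : nhol (S ∪ B) ≤ nhol S + ncc (S ∩ B) := ENat.toNat_le_of_le_natCast hle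
  rw [sub_le_iff_le_add']
  exact_mod_cast hnat

theorem stmt_7 (R₀ R₁ : ℝ) (hR₀ : 0 < R₀) (hR₀₁ : R₀ ≤ R₁)
    (ω : Finset (EuclideanSpace ℝ (Fin 2) × ℝ))
    (hω : ∀ p ∈ ω, p.2 ∈ Set.Icc R₀ R₁)
    (x : EuclideanSpace ℝ (Fin 2)) (R : ℝ) (hR : 0 < R) :
    (nhol (surface ω ∪ Metric.closedBall x R) : ℝ) - (nhol (surface ω) : ℝ) ≤
      (ncc (surface ω ∩ Metric.closedBall x R) : ℝ) :=
  stmt_7_general ω (fun p _ ↦ isCompact_closedBall p.1 p.2) (fun p _ ↦ convex_closedBall p.1 p.2)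
    (isCompact_closedBall x R) (convex_closedBall x R)
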